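/- Let X be a real random variable taking strictly positive values, let s > 2 be an integer, and for 0 ≤ i ≤ s set p_i = Pr(D_i > D_{s−i}), where D_i and D_{s−i} are independent random variables distributed respectively like i⊙X and (s−i)⊙X. Then p_i = i·p_1 for every i ∈ {1, …, s}; in particular p_1 = 1/s. -/

import Mathlib

open MeasureTheory ProbabilityTheory
open scoped ENNReal

/-- The unit vector in the plane with direction angle `θ`. -/
noncomputable def stepVec (θ : ℝ) : EuclideanSpace ℝ (Fin 2) :=
  (WithLp.equiv 2 (Fin 2 → ℝ)).symm ![Real.cos θ, Real.sin θ]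

/-- The uniform probability distribution on the unit circle of the plane. -/
noncomputable def uniformCircle : Measure (EuclideanSpace ℝ (Fin 2)) :=
  Measure.map stepVec
    ((ENNReal.ofReal (2 * Real.pi))⁻¹ • volume.restrict (Set.Ioc 0 (2 * Real.pi)))

/-- The distribution of `n ⊙ X`: the distance from the origin after `n` independent
steps whose lengths are i.i.d. with law `μ` and whose directions are i.i.d. uniform
on the unit circle, all independent. -/
noncomputable def walkDist (μ : Measure ℝ) (n : ℕ) : Measure ℝ :=
  Measure.map
    (fun p : (Fin n → ℝ) × (Fin n → EuclideanSpace ℝ (Fin 2)) => ‖∑ i, p.1 i • p.2 i‖)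
    ((Measure.pi fun _ => μ).prod (Measure.pi fun _ => uniformCircle))

/-!
Let `A`, `B`, `C` be the sums of three disjoint blocks of `i`, `j`, `k` steps, `i + j + k = s`.
Their laws are invariant under rotations, so given the lengths `a`, `b`, `c` the angle between
`-B` and `C` is uniform on `[0, π]`. By the law of cosines `|B + C| < |A|` says that this angle is
smaller than the angle opposite `a` in the triangle with sides `a`, `b`, `c`, so it has
conditional probability this angle over `π`. The angles of a triangle sum to `π`, hence
`p i + p j + p k = 1`. Ties have probability zero, so also `p (i + 1) + p k = 1` when `j = 1`, and
comparing gives `p (i + 1) = p i + p 1`.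
-/

open InnerProductGeometry AddCircle

/-- The angle opposite the side `a` in a triangle with sides `a`, `b`, `c`, by the law of cosines.
Since `Real.arccos` clamps its argument to `[-1, 1]`, sides violating the triangle inequality count
as a flattened triangle: the angle is `π` if `a` is the longest side and `0` otherwise. For `b = 0`
or `c = 0` it is `π / 2`. -/
noncomputable def triangleAngle (a b c : ℝ) : ℝ :=
  Real.arccos ((b ^ 2 + c ^ 2 - a ^ 2) / (2 * b * c))

section TriangleAngle

variable {a b c : ℝ}

lemma triangleAngle_comm (a b c : ℝ) : triangleAngle a b c = triangleAngle a c b := by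
  unfold triangleAngle
  congr 1
  ring

lemma triangleAngle_nonneg (a b c : ℝ) : 0 ≤ triangleAngle a b c := Real.arccos_nonneg _

lemma triangleAngle_le_pi (a b c : ℝ) : triangleAngle a b c ≤ Real.pi := Real.arccos_le_pi _

lemma measurable_triangleAngle : Measurable fun q : ℝ × ℝ × ℝ => triangleAngle q.1 q.2.1 q.2.2 :=
  Real.measurable_arccos.comp (by fun_prop)

lemma triangleAngle_mono {a' : ℝ} (ha : 0 ≤ a) (haa' : a ≤ a') (hb : 0 ≤ b) (hc : 0 ≤ c) :
    triangleAngle a b c ≤ triangleAngle a' b c := by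
  apply Real.arccos_le_arccos
  gcongr

lemma triangleAngle_eq_pi (hb : 0 < b) (hc : 0 < c) (h : b + c ≤ a) :
    triangleAngle a b c = Real.pi := by
  apply Real.arccos_of_le_neg_one
  rw [div_le_iff₀ (by positivity)]
  nlinarith

lemma triangleAngle_eq_zero (ha : 0 ≤ a) (hb : 0 < b) (hc : 0 < c) (h : a + c ≤ b) :
    triangleAngle a b c = 0 := by
  apply Real.arccos_of_one_le
  rw [le_div_iff₀ (by positivity)]
  nlinarith

lemma triangleAngle_norm_sub {V : Type*} [NormedAddCommGroup V] [InnerProductSpace ℝ V]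
    (x y : V) : triangleAngle ‖x - y‖ ‖x‖ ‖y‖ = angle x y := by
  unfold triangleAngle angle
  rw [real_inner_eq_norm_mul_self_add_norm_mul_self_sub_norm_sub_mul_self_div_two]
  ring_nf

lemma exists_complex_triangle (hb : 0 < b) (hc : 0 < c) (ha : 0 ≤ a) (hab : a ≤ b + c)
    (hba : b ≤ a + c) (hca : c ≤ a + b) : ∃ x y : ℂ, ‖x - y‖ = a ∧ ‖x‖ = b ∧ ‖y‖ = c := by
  set t := (b ^ 2 + c ^ 2 - a ^ 2) / (2 * b * c) with ht
  have hbct : 2 * b * c * t = b ^ 2 + c ^ 2 - a ^ 2 := by rw [ht]; field_simp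
  have ht_ge : -1 ≤ t := by rw [ht, le_div_iff₀ (by positivity)]; nlinarith
  have ht_le : t ≤ 1 := by rw [ht, div_le_iff₀ (by positivity)]; nlinarith
  refine ⟨b, c * Circle.exp (Real.arccos t), ?_, by simp [hb.le], by simp [hc.le]⟩
  rw [← sq_eq_sq₀ (norm_nonneg _) ha, ← Complex.normSq_eq_norm_sq, Complex.normSq_apply]
  simp only [Circle.coe_exp, Complex.exp_mul_I, Complex.sub_re, Complex.sub_im,
    Complex.re_ofReal_mul, Complex.im_ofReal_mul, Complex.add_re, Complex.add_im,
    Complex.mul_I_re, Complex.mul_I_im,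
    Complex.cos_ofReal_re, Complex.cos_ofReal_im, Complex.sin_ofReal_re, Complex.sin_ofReal_im,
    Complex.ofReal_re, Complex.ofReal_im, Real.cos_arccos ht_ge ht_le]
  linear_combination c ^ 2 * Real.sin_sq_add_cos_sq (Real.arccos t) - hbct +
    c ^ 2 * (t + Real.cos (Real.arccos t)) * (Real.cos_arccos ht_ge ht_le).symm

lemma triangleAngle_add_add_eq_pi (ha : 0 < a) (hb : 0 < b) (hc : 0 < c) :
    triangleAngle a b c + triangleAngle b a c + triangleAngle c a b = Real.pi := by
  rcases le_total (b + c) a with hbca | hbca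
  · rw [triangleAngle_eq_pi hb hc hbca, triangleAngle_eq_zero hb.le ha hc hbca,
      triangleAngle_eq_zero hc.le ha hb (by linarith)]
    ring
  rcases le_total (a + c) b with hacb | hacb
  · rw [triangleAngle_eq_zero ha.le hb hc hacb, triangleAngle_eq_pi ha hc hacb,
      triangleAngle_comm c, triangleAngle_eq_zero hc.le hb ha (by linarith)]
    ring
  rcases le_total (a + b) c with habc | habc
  · rw [triangleAngle_comm a, triangleAngle_eq_zero ha.le hc hb habc, triangleAngle_comm b,
      triangleAngle_eq_zero hb.le hc ha (by linarith), triangleAngle_eq_pi ha hb habc]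
    ring
  obtain ⟨x, y, rfl, rfl, rfl⟩ := exists_complex_triangle hb hc ha.le hbca hacb habc
  have angle_sum := angle_add_angle_sub_add_angle_sub_eq_pi x (norm_pos_iff.1 hc)
  rw [← triangleAngle_norm_sub x y, ← triangleAngle_norm_sub x, ← triangleAngle_norm_sub y,
    sub_sub_cancel, sub_sub_cancel, norm_sub_rev y x] at angle_sum
  rw [triangleAngle_comm ‖x‖, triangleAngle_comm ‖y‖]
  linear_combination angle_sum

lemma ofReal_triangleAngle_div_pi_add_add_eq_one (ha : 0 < a) (hb : 0 < b) (hc : 0 < c) :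
    ENNReal.ofReal (triangleAngle a b c / Real.pi) +
      ENNReal.ofReal (triangleAngle b a c / Real.pi) +
      ENNReal.ofReal (triangleAngle c a b / Real.pi) = 1 := by
  have angle_div_nonneg (x y z : ℝ) : 0 ≤ triangleAngle x y z / Real.pi :=
    div_nonneg (triangleAngle_nonneg x y z) Real.pi_pos.le
  rw [← ENNReal.ofReal_add (angle_div_nonneg a b c) (angle_div_nonneg b a c),
    ← ENNReal.ofReal_add (add_nonneg (angle_div_nonneg a b c) (angle_div_nonneg b a c))
      (angle_div_nonneg c a b), ← add_div, ← add_div, triangleAngle_add_add_eq_pi ha hb hc,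
    div_self Real.pi_ne_zero, ENNReal.ofReal_one]

end TriangleAngle

/-
`Circle` carries no measurable structure, so a uniform direction is written `toCircle θ` with `θ`
Haar distributed on `AddCircle (2 * Real.pi)`.
-/
local instance : Fact (0 < 2 * Real.pi) := ⟨Real.two_pi_pos⟩

lemma haarAddCircle_eq_map_coe {T : ℝ} [hT : Fact (0 < T)] (t : ℝ) :
    (haarAddCircle : Measure (AddCircle T)) =
      ((ENNReal.ofReal T)⁻¹ • volume.restrict (Set.Ioc t (t + T))).map (↑) := by
  have hT0 : ENNReal.ofReal T ≠ 0 := (ENNReal.ofReal_pos.2 hT.out).ne'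
  rw [Measure.map_smul, (AddCircle.measurePreserving_mk T t).map_eq, volume_eq_smul_haarAddCircle,
    smul_smul, ENNReal.inv_mul_cancel hT0 ENNReal.ofReal_ne_top, one_smul]

lemma toCircle_two_pi_coe (t : ℝ) : toCircle (t : AddCircle (2 * Real.pi)) = Circle.exp t := by
  rw [toCircle_apply_mk, div_self Real.two_pi_pos.ne', one_mul]

lemma angle_toCircle_smul {x y : ℂ} (hx : x ≠ 0) (hy : y ≠ 0) (θ : AddCircle (2 * Real.pi)) :
    angle x (toCircle θ • y) =
      angle 1 (toCircle (θ + ((y / x).arg : AddCircle (2 * Real.pi))) : ℂ) := by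
  have hyx : (‖y / x‖ : ℂ) * toCircle ((y / x).arg : AddCircle (2 * Real.pi)) = y / x := by
    rw [toCircle_two_pi_coe, Circle.coe_exp, Complex.norm_mul_exp_arg_mul_I]
  have hsmul : toCircle θ • y =
      x * (‖y / x‖ • (toCircle (θ + ((y / x).arg : AddCircle (2 * Real.pi))) : ℂ)) := by
    rw [toCircle_add, Circle.smul_def, smul_eq_mul, Circle.coe_mul, Complex.real_smul,
      mul_left_comm (‖y / x‖ : ℂ), hyx]
    field_simp
  rw [hsmul, ← angle_smul_right_of_pos 1 _ (norm_pos_iff.2 (div_ne_zero hy hx)),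
    ← Complex.angle_mul_left hx 1, mul_one]

lemma measurable_toCircle {T : ℝ} : Measurable fun θ : AddCircle T => (toCircle θ : ℂ) :=
  (continuous_subtype_val.comp continuous_toCircle).measurable

lemma measurable_toCircle_smul {T : ℝ} :
    Measurable fun q : AddCircle T × ℂ => toCircle q.1 • q.2 :=
  (measurable_toCircle.comp measurable_fst).mul measurable_snd

lemma measurable_angle_right {V : Type*} [NormedAddCommGroup V] [InnerProductSpace ℝ V]
    [MeasurableSpace V] [OpensMeasurableSpace V] (x : V) : Measurable (angle x) :=
  Real.measurable_arccos.comp <| (continuous_const.inner continuous_id).measurable.div (by fun_prop)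

section

variable {x y : ℂ}

lemma measure_angle_toCircle_smul_mem (hx : x ≠ 0) (hy : y ≠ 0) {S : Set ℝ}
    (hS : MeasurableSet S) :
    (haarAddCircle : Measure (AddCircle (2 * Real.pi))) {θ | angle x (toCircle θ • y) ∈ S} =
      (ENNReal.ofReal (2 * Real.pi))⁻¹ * volume ({t | |t| ∈ S} ∩ Set.Ioc (-Real.pi) Real.pi) := by
  have hset : MeasurableSet {θ : AddCircle (2 * Real.pi) | angle 1 (toCircle θ : ℂ) ∈ S} :=
    ((measurable_angle_right 1).comp measurable_toCircle) hS
  have angle_exp : ∀ t ∈ Set.Ioc (-Real.pi) Real.pi, angle 1 (Circle.exp t : ℂ) = |t| :=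
    fun t ht => by rw [Complex.angle_one_left (Circle.coe_ne_zero _), Circle.arg_exp ht.1 ht.2]
  simp_rw [angle_toCircle_smul hx hy]
  calc (haarAddCircle : Measure (AddCircle (2 * Real.pi)))
        {θ | angle 1 (toCircle (θ + ((y / x).arg : AddCircle (2 * Real.pi))) : ℂ) ∈ S}
      = haarAddCircle {θ : AddCircle (2 * Real.pi) | angle 1 (toCircle θ : ℂ) ∈ S} :=
        measure_preimage_add_right _ _ {θ | angle 1 (toCircle θ : ℂ) ∈ S}
    _ = (ENNReal.ofReal (2 * Real.pi))⁻¹ *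
          volume ({t : ℝ | angle 1 (Circle.exp t : ℂ) ∈ S} ∩ Set.Ioc (-Real.pi) Real.pi) := by
        rw [haarAddCircle_eq_map_coe (-Real.pi), show -Real.pi + 2 * Real.pi = Real.pi by ring,
          Measure.map_apply AddCircle.measurable_mk' hset, Measure.smul_apply,
          Measure.restrict_apply (AddCircle.measurable_mk' hset)]
        simp_rw [← toCircle_two_pi_coe]
        rfl
    _ = _ := by
        congr 2
        ext t
        exact and_congr_left fun ht => by rw [Set.mem_ofPred_eq, angle_exp t ht, Set.mem_ofPred_eq]

lemma measure_angle_toCircle_smul_lt (hx : x ≠ 0) (hy : y ≠ 0) {α : ℝ} (hα : α ≤ Real.pi) :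
    (haarAddCircle : Measure (AddCircle (2 * Real.pi))) {θ | angle x (toCircle θ • y) < α} =
      ENNReal.ofReal (α / Real.pi) := by
  have preimage_abs : {t : ℝ | |t| ∈ Set.Iio α} ∩ Set.Ioc (-Real.pi) Real.pi = Set.Ioo (-α) α := by
    ext t
    simp only [Set.mem_inter_iff, Set.mem_ofPred_eq, Set.mem_Iio, Set.mem_Ioc, Set.mem_Ioo, abs_lt]
    grind
  have := Real.pi_pos
  refine (measure_angle_toCircle_smul_mem hx hy measurableSet_Iio).trans ?_
  rw [preimage_abs, Real.volume_Ioo, ← ENNReal.ofReal_inv_of_pos (by positivity),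
    ← ENNReal.ofReal_mul (by positivity)]
  congr 1
  field_simp
  ring

lemma measure_angle_toCircle_smul_eq (hx : x ≠ 0) (hy : y ≠ 0) (α : ℝ) :
    (haarAddCircle : Measure (AddCircle (2 * Real.pi))) {θ | angle x (toCircle θ • y) = α} =
      0 := by
  have hfin : {t : ℝ | |t| ∈ ({α} : Set ℝ)}.Finite :=
    (Set.toFinite {α, -α}).subset fun t ht => eq_or_eq_neg_of_abs_eq ht
  refine (measure_angle_toCircle_smul_mem hx hy (measurableSet_singleton α)).trans ?_
  rw [measure_mono_null Set.inter_subset_left (hfin.measure_zero volume), mul_zero]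

end

lemma measure_eq_lintegral_measure_smul_mem {M α T : Type*} [SMul M α] [MeasurableSpace α]
    [MeasurableSpace T] {γ : Measure α} [SFinite γ] [SMulInvariantMeasure M α γ] (τ : Measure T)
    [IsProbabilityMeasure τ] {f : T → M} (hf : Measurable fun q : T × α => f q.1 • q.2)
    {S : Set α} (hS : MeasurableSet S) :
    γ S = ∫⁻ z, τ {t | f t • z ∈ S} ∂γ :=
  calc γ S = ∫⁻ t, γ ((f t • ·) ⁻¹' S) ∂τ := by
        simp only [SMulInvariantMeasure.measure_preimage_smul _ hS, lintegral_const, measure_univ,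
          mul_one]
    _ = (τ.prod γ) {q | f q.1 • q.2 ∈ S} := (Measure.prod_apply (hf hS)).symm
    _ = ∫⁻ z, τ {t | f t • z ∈ S} ∂γ := Measure.prod_apply_symm (hf hS)

section

variable {b c : ℂ} {a : ℝ}

lemma triangleAngle_norm_add_toCircle_smul (b c : ℂ) (θ : AddCircle (2 * Real.pi)) :
    triangleAngle ‖b + toCircle θ • c‖ ‖b‖ ‖c‖ = angle (-b) (toCircle θ • c) := by
  have hnorm : ‖toCircle θ • c‖ = ‖c‖ := by
    rw [Circle.smul_def, norm_smul, Circle.norm_coe, one_mul]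
  rw [← triangleAngle_norm_sub, norm_neg, hnorm, ← norm_neg (b + _), neg_add']

lemma measure_norm_add_toCircle_smul_lt (hb : b ≠ 0) (hc : c ≠ 0) (ha : 0 ≤ a) :
    (haarAddCircle : Measure (AddCircle (2 * Real.pi))) {θ | ‖b + toCircle θ • c‖ < a} =
      ENNReal.ofReal (triangleAngle a ‖b‖ ‖c‖ / Real.pi) := by
  have angle_eq (θ : AddCircle (2 * Real.pi)) := triangleAngle_norm_add_toCircle_smul b c θ
  rw [← measure_angle_toCircle_smul_lt (neg_ne_zero.2 hb) hc (triangleAngle_le_pi a ‖b‖ ‖c‖)]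
  apply le_antisymm
  · have subset : {θ : AddCircle (2 * Real.pi) | ‖b + toCircle θ • c‖ < a} ⊆
        {θ | angle (-b) (toCircle θ • c) < triangleAngle a ‖b‖ ‖c‖} ∪
          {θ | angle (-b) (toCircle θ • c) = triangleAngle a ‖b‖ ‖c‖} := by
      intro θ (hθ : _ < a)
      refine lt_or_eq_of_le (a := angle (-b) (toCircle θ • c)) ?_
      exact angle_eq θ ▸ triangleAngle_mono (norm_nonneg _) hθ.le (norm_nonneg b) (norm_nonneg c)
    refine (measure_mono subset).trans ((measure_union_le _ _).trans_eq ?_)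
    rw [measure_angle_toCircle_smul_eq (neg_ne_zero.2 hb) hc, add_zero]
  · refine measure_mono fun θ (hθ : angle _ _ < _) => show _ < a from ?_
    contrapose! hθ
    exact angle_eq θ ▸ triangleAngle_mono ha hθ (norm_nonneg b) (norm_nonneg c)

lemma measure_norm_add_toCircle_smul_eq (hb : b ≠ 0) (hc : c ≠ 0) (a : ℝ) :
    (haarAddCircle : Measure (AddCircle (2 * Real.pi))) {θ | ‖b + toCircle θ • c‖ = a} = 0 := by
  refine measure_mono_null (fun θ (hθ : _ = a) => ?_)
    (measure_angle_toCircle_smul_eq (neg_ne_zero.2 hb) hc (triangleAngle a ‖b‖ ‖c‖))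
  exact hθ ▸ (triangleAngle_norm_add_toCircle_smul b c θ).symm

variable {γ : Measure ℂ} [SFinite γ] [SMulInvariantMeasure Circle ℂ γ]

lemma measure_norm_add_lt (hγ0 : γ {0} = 0) (hb : b ≠ 0) (ha : 0 ≤ a) :
    γ {z | ‖b + z‖ < a} = ∫⁻ c, ENNReal.ofReal (triangleAngle a ‖b‖ ‖c‖ / Real.pi) ∂γ := by
  refine (measure_eq_lintegral_measure_smul_mem haarAddCircle
    (measurable_toCircle_smul (T := 2 * Real.pi))
    (measurableSet_lt (by fun_prop) measurable_const)).trans (lintegral_congr_ae ?_)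
  filter_upwards [measure_eq_zero_iff_ae_notMem.1 hγ0] with c hc
  exact measure_norm_add_toCircle_smul_lt hb hc ha

lemma measure_norm_add_eq (hγ0 : γ {0} = 0) (hb : b ≠ 0) (a : ℝ) : γ {z | ‖b + z‖ = a} = 0 := by
  refine (measure_eq_lintegral_measure_smul_mem haarAddCircle
    (measurable_toCircle_smul (T := 2 * Real.pi))
    (measurableSet_eq_fun (by fun_prop) measurable_const)).trans ?_
  refine lintegral_eq_zero_of_ae_eq_zero ?_
  filter_upwards [measure_eq_zero_iff_ae_notMem.1 hγ0] with c hc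
  exact measure_norm_add_toCircle_smul_eq hb hc a

end

lemma conv_apply_eq_lintegral {M : Type*} [AddMonoid M] [MeasurableSpace M] [MeasurableAdd₂ M]
    (β γ : Measure M) [SFinite γ] {S : Set M} (hS : MeasurableSet S) :
    (β ∗ γ) S = ∫⁻ x, γ {y | x + y ∈ S} ∂β := by
  rw [Measure.conv, Measure.map_apply measurable_add hS, Measure.prod_apply (measurable_add hS)]
  rfl

section TripleProduct

variable {X Y Z : Type*} [MeasurableSpace X] [MeasurableSpace Y] [MeasurableSpace Z]
  {α : Measure X} {β : Measure Y} {γ : Measure Z} [SFinite β] [SFinite γ]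
  {f : X × Y × Z → ℝ≥0∞}

lemma lintegral_prod_prod (hf : Measurable f) :
    ∫⁻ q, f q ∂α.prod (β.prod γ) = ∫⁻ x, ∫⁻ y, ∫⁻ z, f (x, y, z) ∂γ ∂β ∂α := by
  rw [lintegral_prod _ hf.aemeasurable]
  exact lintegral_congr fun x => lintegral_prod _ (hf.comp measurable_prodMk_left).aemeasurable

variable [SFinite α]

lemma lintegral_prod_prod_left_comm (hf : Measurable f) :
    ∫⁻ q, f q ∂α.prod (β.prod γ) = ∫⁻ y, ∫⁻ x, ∫⁻ z, f (x, y, z) ∂γ ∂α ∂β := by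
  have hf' : Measurable fun q : (X × Y) × Z => f (q.1.1, q.1.2, q.2) := hf.comp (by fun_prop)
  rw [lintegral_prod_prod hf, lintegral_lintegral_swap]
  exact hf'.lintegral_prod_right'.aemeasurable

lemma lintegral_prod_prod_rotate (hf : Measurable f) :
    ∫⁻ q, f q ∂α.prod (β.prod γ) = ∫⁻ z, ∫⁻ x, ∫⁻ y, f (x, y, z) ∂β ∂α ∂γ := by
  have hf' : Measurable fun q : X × Z × Y => f (q.1, q.2.2, q.2.1) := hf.comp (by fun_prop)
  rw [← lintegral_prod_prod_left_comm hf', lintegral_prod_prod hf', lintegral_prod_prod hf]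
  refine lintegral_congr fun x => lintegral_lintegral_swap ?_
  exact (hf.comp measurable_prodMk_left).aemeasurable

end TripleProduct

/-- The probability that a vector with law `α` is strictly longer than an independent vector with
law `β`. -/
noncomputable def longerProb {E : Type*} [MeasurableSpace E] [Norm E] (α β : Measure E) : ℝ≥0∞ :=
  (α.prod β) {q | ‖q.2‖ < ‖q.1‖}

section NormedGroup

variable {E : Type*} [MeasurableSpace E] [NormedAddCommGroup E] [OpensMeasurableSpace E]

lemma measurableSet_norm_snd_lt_norm_fst : MeasurableSet {q : E × E | ‖q.2‖ < ‖q.1‖} :=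
  measurableSet_lt measurable_snd.norm measurable_fst.norm

lemma longerProb_eq_lintegral (α β : Measure E) [SFinite β] :
    longerProb α β = ∫⁻ a, β {z | ‖z‖ < ‖a‖} ∂α :=
  Measure.prod_apply measurableSet_norm_snd_lt_norm_fst

lemma longerProb_dirac_zero (β : Measure E) [SFinite β] : longerProb (Measure.dirac 0) β = 0 := by
  rw [longerProb_eq_lintegral]
  simp [(norm_nonneg _).not_gt]

lemma longerProb_add_longerProb_swap (α β : Measure E) [IsProbabilityMeasure α]
    [IsProbabilityMeasure β] (hβ : ∀ a, β {z | ‖z‖ = a} = 0) :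
    longerProb α β + longerProb β α = 1 := by
  have tie_null : (α.prod β) {q : E × E | ‖q.2‖ = ‖q.1‖} = 0 := by
    rw [Measure.prod_apply (measurableSet_eq_fun measurable_snd.norm measurable_fst.norm)]
    exact lintegral_eq_zero_of_ae_eq_zero (.of_forall fun a => hβ ‖a‖)
  have swap_eq : longerProb β α = (α.prod β) {q | ‖q.1‖ < ‖q.2‖} := by
    rw [longerProb, ← Measure.prod_swap,
      Measure.map_apply measurable_swap measurableSet_norm_snd_lt_norm_fst]
    rfl
  have compl_ae_eq : ({q : E × E | ‖q.1‖ < ‖q.2‖} : Set (E × E)) =ᵐ[α.prod β]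
      {q | ‖q.2‖ < ‖q.1‖}ᶜ := by
    filter_upwards [measure_eq_zero_iff_ae_notMem.1 tie_null] with q (hq : ¬_ = _)
    exact propext ⟨fun h => h.not_gt, fun h => lt_of_le_of_ne (not_lt.1 h) (Ne.symm hq)⟩
  rw [swap_eq, measure_congr compl_ae_eq]
  exact prob_add_prob_compl measurableSet_norm_snd_lt_norm_fst

end NormedGroup

section Conv

variable {α β γ : Measure ℂ} [SFinite γ] [SMulInvariantMeasure Circle ℂ γ]

lemma conv_norm_eq (hβ0 : β {0} = 0) (hγ0 : γ {0} = 0) (a : ℝ) : (β ∗ γ) {z | ‖z‖ = a} = 0 := by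
  rw [conv_apply_eq_lintegral β γ (measurableSet_eq_fun measurable_norm measurable_const)]
  refine lintegral_eq_zero_of_ae_eq_zero ?_
  filter_upwards [measure_eq_zero_iff_ae_notMem.1 hβ0] with b hb
  exact measure_norm_add_eq hγ0 hb a

lemma longerProb_conv [SFinite β] (hβ0 : β {0} = 0) (hγ0 : γ {0} = 0) :
    longerProb α (β ∗ γ) =
      ∫⁻ a, ∫⁻ b, ∫⁻ c, ENNReal.ofReal (triangleAngle ‖a‖ ‖b‖ ‖c‖ / Real.pi) ∂γ ∂β ∂α := by
  rw [longerProb_eq_lintegral]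
  refine lintegral_congr fun a => ?_
  rw [conv_apply_eq_lintegral β γ (measurableSet_lt measurable_norm measurable_const)]
  refine lintegral_congr_ae ?_
  filter_upwards [measure_eq_zero_iff_ae_notMem.1 hβ0] with b hb
  exact measure_norm_add_lt hγ0 hb (norm_nonneg a)

lemma longerProb_conv_add_add_eq_one [IsProbabilityMeasure α] [IsProbabilityMeasure β]
    [IsProbabilityMeasure γ] [SMulInvariantMeasure Circle ℂ β]
    (hα0 : α {0} = 0) (hβ0 : β {0} = 0) (hγ0 : γ {0} = 0) :
    longerProb α (β ∗ γ) + longerProb β (α ∗ γ) + longerProb γ (α ∗ β) = 1 := by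
  let F : ℝ × ℝ × ℝ → ℝ≥0∞ :=
    fun r => ENNReal.ofReal (triangleAngle r.1 r.2.1 r.2.2 / Real.pi)
  have hF : Measurable F := (measurable_triangleAngle.div_const _).ennreal_ofReal
  have hF₁ : Measurable fun q : ℂ × ℂ × ℂ => F (‖q.1‖, ‖q.2.1‖, ‖q.2.2‖) := hF.comp (by fun_prop)
  have hF₂ : Measurable fun q : ℂ × ℂ × ℂ => F (‖q.2.1‖, ‖q.1‖, ‖q.2.2‖) := hF.comp (by fun_prop)
  have hF₃ : Measurable fun q : ℂ × ℂ × ℂ => F (‖q.2.2‖, ‖q.1‖, ‖q.2.1‖) := hF.comp (by fun_prop)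
  have ae_ne_zero : ∀ᵐ q ∂α.prod (β.prod γ), q.1 ≠ 0 ∧ q.2.1 ≠ 0 ∧ q.2.2 ≠ 0 := by
    have hα := measure_eq_zero_iff_ae_notMem.1 hα0
    have hβ := measure_eq_zero_iff_ae_notMem.1 hβ0
    have hγ := measure_eq_zero_iff_ae_notMem.1 hγ0
    filter_upwards [Measure.quasiMeasurePreserving_fst.ae hα,
      (Measure.quasiMeasurePreserving_fst.comp Measure.quasiMeasurePreserving_snd).ae hβ,
      (Measure.quasiMeasurePreserving_snd.comp Measure.quasiMeasurePreserving_snd).ae hγ]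
      with q h₁ h₂ h₃ using ⟨h₁, h₂, h₃⟩
  rw [longerProb_conv hβ0 hγ0, longerProb_conv hα0 hγ0, longerProb_conv hα0 hβ0,
    ← lintegral_prod_prod hF₁, ← lintegral_prod_prod_left_comm hF₂,
    ← lintegral_prod_prod_rotate hF₃, ← lintegral_add_left hF₁, ← lintegral_add_right _ hF₃]
  refine (lintegral_congr_ae ?_).trans lintegral_one |>.trans measure_univ
  filter_upwards [ae_ne_zero] with q hq
  exact ofReal_triangleAngle_div_pi_add_add_eq_one (norm_pos_iff.2 hq.1) (norm_pos_iff.2 hq.2.1)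
    (norm_pos_iff.2 hq.2.2)

end Conv

/-- The `n`-fold convolution power of `ν`: the law of a sum of `n` independent variables with
law `ν`. -/
noncomputable def convPow {M : Type*} [AddMonoid M] [MeasurableSpace M] (ν : Measure M) :
    ℕ → Measure M
  | 0 => Measure.dirac 0
  | n + 1 => ν ∗ convPow ν n

section ConvPow

variable {M : Type*} [MeasurableSpace M]

section AddMonoid

variable [AddMonoid M] [MeasurableAdd₂ M] (ν : Measure M) [IsProbabilityMeasure ν]

instance isProbabilityMeasure_convPow : ∀ n, IsProbabilityMeasure (convPow ν n)
  | 0 => Measure.dirac.isProbabilityMeasure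
  | n + 1 => by
    have := isProbabilityMeasure_convPow n
    unfold convPow
    infer_instance

lemma convPow_add (m n : ℕ) : convPow ν (m + n) = convPow ν m ∗ convPow ν n := by
  induction m with
  | zero => rw [Nat.zero_add, convPow, Measure.dirac_zero_conv]
  | succ m ih => rw [Nat.succ_add, convPow, ih, convPow, Measure.conv_assoc]

lemma map_convPow {M' F : Type*} [MeasurableSpace M'] [AddMonoid M'] [MeasurableAdd₂ M']
    [FunLike F M M'] [AddMonoidHomClass F M M'] (L : F) (hL : Measurable L) (n : ℕ) :
    (convPow ν n).map L = convPow (ν.map L) n := by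
  induction n with
  | zero => rw [convPow, convPow, Measure.map_dirac' hL, map_zero]
  | succ n ih =>
    rw [convPow, convPow, ← ih]
    exact Measure.map_conv_addMonoidHom (L : M →+ M') hL

instance smulInvariantMeasure_convPow {G : Type*} [Group G] [DistribMulAction G M]
    [MeasurableConstSMul G M] [SMulInvariantMeasure G M ν] (n : ℕ) :
    SMulInvariantMeasure G M (convPow ν n) where
  measure_preimage_smul c S hS := by
    have map_eq : (convPow ν n).map (c • ·) = convPow ν n := by
      conv_rhs => rw [← MeasureTheory.map_smul (μ := ν) c]
      exact map_convPow ν (DistribSMul.toAddMonoidHom M c) (measurable_const_smul c) n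
    rw [← Measure.map_apply (measurable_const_smul c) hS, map_eq]

end AddMonoid

lemma map_sum_pi_eq_convPow [AddCommMonoid M] [MeasurableAdd₂ M] (ν : Measure M)
    [IsProbabilityMeasure ν] (n : ℕ) :
    (Measure.pi fun _ : Fin n => ν).map (fun z => ∑ i, z i) = convPow ν n := by
  induction n with
  | zero => simp [convPow, Measure.map_const]
  | succ n ih =>
    have split := measurePreserving_piFinSuccAbove (fun _ : Fin (n + 1) => ν) 0
    rw [convPow, ← ih, Measure.conv]
    nth_rewrite 2 [← Measure.map_id (μ := ν)]
    rw [Measure.map_prod_map _ _ measurable_id (by fun_prop), ← split.map_eq,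
      Measure.map_map (by fun_prop) split.measurable, Measure.map_map (by fun_prop) (by fun_prop)]
    congr 1
    ext z
    exact Fin.sum_univ_succ z

end ConvPow

section RotationInvariantSteps

variable {ν : Measure ℂ} [IsProbabilityMeasure ν] [SMulInvariantMeasure Circle ℂ ν]

lemma convPow_succ_singleton_zero (hν0 : ν {0} = 0) (n : ℕ) : convPow ν (n + 1) {0} = 0 := by
  induction n with
  | zero => rwa [convPow, convPow, Measure.conv_dirac_zero]
  | succ n ih =>
    rw [convPow]
    simpa only [norm_eq_zero, Set.ofPred_eq_eq_singleton] using conv_norm_eq hν0 ih 0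

lemma convPow_norm_eq (hν0 : ν {0} = 0) {n : ℕ} (hn : 2 ≤ n) (a : ℝ) :
    convPow ν n {z | ‖z‖ = a} = 0 := by
  obtain ⟨n, rfl⟩ := Nat.exists_eq_add_of_le' hn
  exact conv_norm_eq hν0 (convPow_succ_singleton_zero hν0 n) a

lemma longerProb_convPow_swap (hν0 : ν {0} = 0) {i j : ℕ} (hij : 2 < i + j) :
    longerProb (convPow ν i) (convPow ν j) + longerProb (convPow ν j) (convPow ν i) = 1 := by
  rcases le_or_gt 2 j with hj | hj
  · exact longerProb_add_longerProb_swap _ _ (convPow_norm_eq hν0 hj)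
  · rw [add_comm]
    exact longerProb_add_longerProb_swap _ _ (convPow_norm_eq hν0 (by omega))

lemma longerProb_convPow_add_add_eq_one (hν0 : ν {0} = 0) {i j k : ℕ} (hi : i ≠ 0) (hj : j ≠ 0)
    (hk : k ≠ 0) :
    longerProb (convPow ν i) (convPow ν (j + k)) + longerProb (convPow ν j) (convPow ν (i + k)) +
      longerProb (convPow ν k) (convPow ν (i + j)) = 1 := by
  have convPow_zero_null {n : ℕ} (hn : n ≠ 0) : convPow ν n {0} = 0 := by
    obtain ⟨n, rfl⟩ := Nat.exists_eq_succ_of_ne_zero hn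
    exact convPow_succ_singleton_zero hν0 n
  rw [convPow_add, convPow_add, convPow_add]
  exact longerProb_conv_add_add_eq_one (convPow_zero_null hi) (convPow_zero_null hj)
    (convPow_zero_null hk)

end RotationInvariantSteps

lemma eq_div_of_add_eq_one_of_add_add_eq_one {s : ℕ} {p : ℕ → ℝ≥0∞} (p_zero : p 0 = 0)
    (pair : ∀ i j, i + j = s → p i + p j = 1)
    (triple : ∀ i j k, i ≠ 0 → j ≠ 0 → k ≠ 0 → i + j + k = s → p i + p j + p k = 1)
    {i : ℕ} (hi : i ≤ s) : p i = i / s := by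
  have p_top : p s = 1 := by simpa only [p_zero, zero_add] using pair 0 s (zero_add s)
  have p_succ : ∀ i < s, p (i + 1) = p i + p 1 := by
    intro i his
    rcases eq_or_ne i 0 with rfl | hi0
    · rw [p_zero, zero_add, zero_add]
    rcases Nat.eq_or_lt_of_le (Nat.succ_le_of_lt his) with (h : i + 1 = s) | h
    · rw [h, p_top, pair i 1 h]
    · obtain ⟨k, rfl⟩ := Nat.exists_eq_add_of_lt h
      have pair_k := pair (i + 1) (k + 1) (by omega)
      have p_k_ne_top : p (k + 1) ≠ ∞ := ne_top_of_le_ne_top ENNReal.one_ne_top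
        (le_add_self.trans_eq pair_k)
      rw [← ENNReal.add_left_inj p_k_ne_top, pair_k,
        triple i 1 (k + 1) hi0 one_ne_zero k.succ_ne_zero (by omega)]
  have p_eq_mul : ∀ i ≤ s, p i = i * p 1 := by
    intro i hi
    induction i with
    | zero => simp [p_zero]
    | succ i ih =>
      rw [p_succ i hi, ih (by omega), Nat.cast_succ, add_mul, one_mul]
  have p_one : p 1 = (s : ℝ≥0∞)⁻¹ :=
    ENNReal.eq_inv_of_mul_eq_one_left <| by rw [mul_comm, ← p_eq_mul s le_rfl, p_top]
  rw [p_eq_mul i hi, p_one, div_eq_mul_inv]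

lemma longerProb_convPow {ν : Measure ℂ} [IsProbabilityMeasure ν] [SMulInvariantMeasure Circle ℂ ν]
    (hν0 : ν {0} = 0) {s i : ℕ} (hs : 2 < s) (hi : i ≤ s) :
    longerProb (convPow ν i) (convPow ν (s - i)) = i / s := by
  refine eq_div_of_add_eq_one_of_add_add_eq_one
    (p := fun i => longerProb (convPow ν i) (convPow ν (s - i))) ?_ ?_ ?_ hi
  · exact longerProb_dirac_zero _
  · rintro i j rfl
    rw [Nat.add_sub_cancel_left, Nat.add_sub_cancel]
    exact longerProb_convPow_swap hν0 hs
  · rintro i j k hi0 hj0 hk0 rfl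
    rw [show i + j + k - i = j + k by omega, show i + j + k - j = i + k by omega,
      Nat.add_sub_cancel]
    exact longerProb_convPow_add_add_eq_one hν0 hi0 hj0 hk0

/-- The law on `ℂ` of one step of the walk: a length with law `μ` times an independent uniform
direction. -/
noncomputable def stepLaw (μ : Measure ℝ) : Measure ℂ :=
  (μ.prod (haarAddCircle : Measure (AddCircle (2 * Real.pi)))).map
    fun q => q.1 • (toCircle q.2 : ℂ)

lemma measurable_real_smul_toCircle {T : ℝ} :
    Measurable fun q : ℝ × AddCircle T => q.1 • (toCircle q.2 : ℂ) :=
  measurable_fst.smul (measurable_toCircle.comp measurable_snd)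

section StepLaw

variable (μ : Measure ℝ)

instance isProbabilityMeasure_stepLaw [IsProbabilityMeasure μ] :
    IsProbabilityMeasure (stepLaw μ) :=
  Measure.isProbabilityMeasure_map measurable_real_smul_toCircle.aemeasurable

lemma stepLaw_apply {S : Set ℂ} (hS : MeasurableSet S) :
    stepLaw μ S = ∫⁻ x, haarAddCircle
      {θ : AddCircle (2 * Real.pi) | x • (toCircle θ : ℂ) ∈ S} ∂μ := by
  rw [stepLaw, Measure.map_apply measurable_real_smul_toCircle hS,
    Measure.prod_apply (measurable_real_smul_toCircle hS)]
  rfl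

instance smulInvariantMeasure_stepLaw : SMulInvariantMeasure Circle ℂ (stepLaw μ) where
  measure_preimage_smul c S hS := by
    have smul_eq (x : ℝ) (θ : AddCircle (2 * Real.pi)) : c • x • (toCircle θ : ℂ) =
        x • (toCircle (θ + ((c : ℂ).arg : AddCircle (2 * Real.pi))) : ℂ) := by
      rw [toCircle_add, toCircle_two_pi_coe, Circle.exp_arg, Circle.smul_def, smul_comm,
        smul_eq_mul, Circle.coe_mul, mul_comm]
    rw [stepLaw_apply μ hS, stepLaw_apply μ (measurable_const_smul c hS)]
    refine lintegral_congr fun x => ?_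
    simp only [Set.mem_preimage, smul_eq]
    exact measure_preimage_add_right _ _ {θ : AddCircle (2 * Real.pi) | x • (toCircle θ : ℂ) ∈ S}

lemma stepLaw_singleton_zero (hμ : μ {0} = 0) : stepLaw μ {0} = 0 := by
  rw [stepLaw_apply μ (measurableSet_singleton 0)]
  refine lintegral_eq_zero_of_ae_eq_zero ?_
  filter_upwards [measure_eq_zero_iff_ae_notMem.1 hμ] with x (hx : x ≠ 0)
  simp [hx]

end StepLaw

lemma measurable_repr_toCircle {T : ℝ} : Measurable fun θ : AddCircle T =>
    Complex.orthonormalBasisOneI.repr (toCircle θ : ℂ) :=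
  Complex.orthonormalBasisOneI.repr.continuous.measurable.comp measurable_toCircle

lemma uniformCircle_eq_map_toCircle :
    uniformCircle = (haarAddCircle : Measure (AddCircle (2 * Real.pi))).map
      fun θ => Complex.orthonormalBasisOneI.repr (toCircle θ) := by
  rw [haarAddCircle_eq_map_coe 0, zero_add,
    Measure.map_map measurable_repr_toCircle AddCircle.measurable_mk', uniformCircle]
  congr 1
  ext t j
  rw [Function.comp_apply, toCircle_two_pi_coe]
  fin_cases j <;> simp [stepVec, Complex.exp_ofReal_mul_I_re, Complex.exp_ofReal_mul_I_im]

instance isProbabilityMeasure_uniformCircle : IsProbabilityMeasure uniformCircle := by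
  rw [uniformCircle_eq_map_toCircle]
  exact Measure.isProbabilityMeasure_map measurable_repr_toCircle.aemeasurable

lemma map_smul_prod_uniformCircle (μ : Measure ℝ) [IsProbabilityMeasure μ] :
    (μ.prod uniformCircle).map (fun q => q.1 • q.2) =
      (stepLaw μ).map Complex.orthonormalBasisOneI.repr := by
  have measurable_repr : Measurable Complex.orthonormalBasisOneI.repr :=
    Complex.orthonormalBasisOneI.repr.continuous.measurable
  nth_rewrite 1 [← Measure.map_id (μ := μ)]
  rw [uniformCircle_eq_map_toCircle,
    Measure.map_prod_map _ _ measurable_id measurable_repr_toCircle,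
    Measure.map_map (by fun_prop) (measurable_id.prodMap measurable_repr_toCircle), stepLaw,
    Measure.map_map measurable_repr measurable_real_smul_toCircle]
  congr 1
  ext1 q
  exact (map_smul Complex.orthonormalBasisOneI.repr q.1 _).symm

lemma walkDist_eq_map_norm_convPow_map_smul (μ : Measure ℝ) [IsProbabilityMeasure μ] (n : ℕ) :
    walkDist μ n = (convPow ((μ.prod uniformCircle).map fun q => q.1 • q.2) n).map norm := by
  have : IsProbabilityMeasure ((μ.prod uniformCircle).map fun q => q.1 • q.2) :=
    Measure.isProbabilityMeasure_map (by fun_prop)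
  have regroup := (measurePreserving_arrowProdEquivProdArrow ℝ (EuclideanSpace ℝ (Fin 2)) (Fin n)
    (fun _ => μ) (fun _ => uniformCircle)).map_eq
  rw [← map_sum_pi_eq_convPow, ← Measure.pi_map_pi (fun _ => by fun_prop), walkDist, ← regroup,
    Measure.map_map (by fun_prop) (MeasurableEquiv.measurable _),
    Measure.map_map (by fun_prop) (by fun_prop), Measure.map_map (by fun_prop) (by fun_prop)]
  rfl

lemma walkDist_eq_map_norm_convPow (μ : Measure ℝ) [IsProbabilityMeasure μ] (n : ℕ) :
    walkDist μ n = (convPow (stepLaw μ) n).map norm := by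
  have measurable_repr : Measurable Complex.orthonormalBasisOneI.repr :=
    Complex.orthonormalBasisOneI.repr.continuous.measurable
  rw [walkDist_eq_map_norm_convPow_map_smul, map_smul_prod_uniformCircle,
    ← map_convPow (stepLaw μ) _ measurable_repr, Measure.map_map measurable_norm measurable_repr]
  congr 1
  ext1 z
  exact Complex.orthonormalBasisOneI.repr.norm_map z

lemma walkDist_prod_walkDist_snd_lt_fst (μ : Measure ℝ) [IsProbabilityMeasure μ] (hμ : μ {0} = 0)
    {s i : ℕ} (hs : 2 < s) (hi : i ≤ s) :
    ((walkDist μ i).prod (walkDist μ (s - i))) {q : ℝ × ℝ | q.2 < q.1} = i / s := by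
  rw [walkDist_eq_map_norm_convPow, walkDist_eq_map_norm_convPow,
    Measure.map_prod_map _ _ measurable_norm measurable_norm,
    Measure.map_apply (by fun_prop) (measurableSet_lt measurable_snd measurable_fst)]
  exact longerProb_convPow (stepLaw_singleton_zero μ hμ) hs hi

theorem stmt_7_general {Ω : Type*} [MeasurableSpace Ω] (P : Measure Ω) [IsProbabilityMeasure P]
    (X : Ω → ℝ) (hX : AEMeasurable X P) (hX0 : ∀ᵐ ω ∂P, X ω ≠ 0)
    (s : ℕ) (hs : 2 < s) (p : ℕ → ℝ≥0∞)
    (hp : ∀ i ≤ s, p i =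
      ((walkDist (Measure.map X P) i).prod (walkDist (Measure.map X P) (s - i)))
        {q : ℝ × ℝ | q.2 < q.1}) :
    (∀ i, 1 ≤ i → i ≤ s → p i = i * p 1) ∧ p 1 = 1 / s := by
  have : IsProbabilityMeasure (P.map X) := Measure.isProbabilityMeasure_map hX
  have map_singleton_zero : P.map X {0} = 0 := by
    rw [Measure.map_apply_of_aemeasurable hX (measurableSet_singleton 0)]
    exact measure_eq_zero_iff_ae_notMem.2 hX0
  have p_eq (i : ℕ) (hi : i ≤ s) : p i = i / s :=
    (hp i hi).trans (walkDist_prod_walkDist_snd_lt_fst _ map_singleton_zero hs hi)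
  have p_one : p 1 = 1 / s := by rw [p_eq 1 (by omega), Nat.cast_one]
  exact ⟨fun i _ hi => by rw [p_eq i hi, p_one, mul_one_div], p_one⟩

theorem stmt_7 {Ω : Type*} [MeasurableSpace Ω] (P : Measure Ω) [IsProbabilityMeasure P]
    (X : Ω → ℝ) (hX : Measurable X) (hXpos : ∀ ω, 0 < X ω)
    (s : ℕ) (hs : 2 < s) (p : ℕ → ℝ≥0∞)
    (hp : ∀ i ≤ s, p i =
      ((walkDist (Measure.map X P) i).prod (walkDist (Measure.map X P) (s - i)))
        {q : ℝ × ℝ | q.2 < q.1}) :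
    (∀ i, 1 ≤ i → i ≤ s → p i = i * p 1) ∧ p 1 = 1 / s :=
  stmt_7_general P X hX.aemeasurable (.of_forall fun ω => (hXpos ω).ne') s hs p hp
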